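/- Fix an odd prime p. There are constants c_p > 0 and r₀(p) < ∞ such that, for every h = 2m ≥ 2 and every r ≥ max{h+1, r₀(p)}, the half-lazy PA-PRA walk on V_r(H) satisfies τ_mix ≥ c_p·max{ r·log r , r·(h+1)/log(e·r) }. -/

import Mathlib

noncomputable section

/-- Data of a bilinear form on `W` turning `W × ZMod p` into a Heisenberg group. -/
class HeisData (p : ℕ) (W : Type*) [Fact (Nat.Prime p)] [AddCommGroup W]
    [Module (ZMod p) W] where
  ω : W →ₗ[ZMod p] W →ₗ[ZMod p] ZMod p

/-- The Heisenberg group structure on `W × ZMod p`: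
`(v,z)·(w,t) = (v+w, z+t+ω(v,w)/2)`. -/
instance heisGroup (p : ℕ) (W : Type*) [Fact (Nat.Prime p)] [AddCommGroup W]
    [Module (ZMod p) W] [HeisData p W] : Group (W × ZMod p) where
  mul x y := (x.1 + y.1, x.2 + y.2 + (2 : ZMod p)⁻¹ * HeisData.ω x.1 y.1)
  one := ((0 : W), (0 : ZMod p))
  inv x := (-x.1, -x.2 + (2 : ZMod p)⁻¹ * HeisData.ω x.1 x.1)
  mul_assoc a b c := by
    refine Prod.ext ?_ ?_
    · show a.1 + b.1 + c.1 = a.1 + (b.1 + c.1)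
      exact add_assoc _ _ _
    · show a.2 + b.2 + (2 : ZMod p)⁻¹ * HeisData.ω a.1 b.1 + c.2 +
          (2 : ZMod p)⁻¹ * HeisData.ω (a.1 + b.1) c.1 =
        a.2 + (b.2 + c.2 + (2 : ZMod p)⁻¹ * HeisData.ω b.1 c.1) +
          (2 : ZMod p)⁻¹ * HeisData.ω a.1 (b.1 + c.1)
      simp only [map_add, LinearMap.add_apply]
      ring
  one_mul a := by
    refine Prod.ext ?_ ?_
    · show 0 + a.1 = a.1; simp
    · show 0 + a.2 + (2 : ZMod p)⁻¹ * HeisData.ω 0 a.1 = a.2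
      simp
  mul_one a := by
    refine Prod.ext ?_ ?_
    · show a.1 + 0 = a.1; simp
    · show a.2 + 0 + (2 : ZMod p)⁻¹ * HeisData.ω a.1 0 = a.2
      simp
  inv_mul_cancel a := by
    refine Prod.ext ?_ ?_
    · show -a.1 + a.1 = 0; simp
    · show -a.2 + (2 : ZMod p)⁻¹ * HeisData.ω a.1 a.1 + a.2 +
          (2 : ZMod p)⁻¹ * HeisData.ω (-a.1) a.1 = 0
      simp only [map_neg, LinearMap.neg_apply]
      ring

open Finset

/-- Total variation distance between two densities on a finite set. -/
def tvDist {X : Type*} [Fintype X] (f g : X → ℝ) : ℝ := (1 / 2) * ∑ x, |f x - g x|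

open Classical in
/-- The uniform probability density on a subset of a finite set. -/
def unifOn {X : Type*} [Fintype X] (G : Set X) : X → ℝ :=
  fun x => if x ∈ G then (Nat.card G : ℝ)⁻¹ else 0

/-- Mixing time: the first time all rows started in `start` are within 1/4 of `π`. -/
def mixTime {X : Type*} [Fintype X] [DecidableEq X] (Q : Matrix X X ℝ) (π : X → ℝ)
    (start : Set X) : ℕ :=
  sInf {t : ℕ | ∀ x ∈ start, tvDist ((Q ^ t) x) π ≤ 1 / 4}

/-- Tuples generating the whole group. -/
def genSet (r : ℕ) (H : Type*) [Group H] : Set (Fin r → H) :=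
  {g | Subgroup.closure (Set.range g) = ⊤}

/-- The PA-PRA kernel on `H^r`. -/
def paP (p : ℕ) [Fact (Nat.Prime p)] (r : ℕ) (H : Type*) [Group H] [Fintype H]
    [DecidableEq H] : Matrix (Fin r → H) (Fin r → H) ℝ :=
  fun g g' => (∑ i : Fin r, ∑ j : Fin r, ∑ a : ZMod p,
    ((if i ≠ j ∧ g' = Function.update g i (g i * (g j) ^ (a.val)) then (1 : ℝ) else 0) +
     (if i ≠ j ∧ g' = Function.update g i ((g j) ^ (a.val) * g i) then (1 : ℝ) else 0)))
    / (2 * (p : ℝ) * r * ((r : ℝ) - 1))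

/-- The half-lazy PA-PRA kernel. -/
def paQ (p : ℕ) [Fact (Nat.Prime p)] (r : ℕ) (H : Type*) [Group H] [Fintype H]
    [DecidableEq H] : Matrix (Fin r → H) (Fin r → H) ℝ :=
  (2⁻¹ : ℝ) • ((1 : Matrix (Fin r → H) (Fin r → H) ℝ) + paP p r H)

/-!
Both terms of the lower bound come from running the walk from a tuple made of a lifted basis of `W`
padded by copies of `1`.

The second term is a count. One step reaches at most `2 p r² + 1` tuples, while `V_r(H)` contains at
least two thirds of the `|H| ^ r` tuples in `H ^ r`; hence the mixing time `t` satisfies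
`|H| ^ r ≤ 2 (2 p r² + 1) ^ t`.

The first term is a drift estimate. A move changes the number `N` of nontrivial entries by at most
one, and increases it only if the multiplier `g j` is nontrivial, so `Q N ≤ (1 + 1 / (2 r)) N`. The
starting tuple has `N ≤ h`, whereas `N ≥ r / 2` for most tuples. If `h + 1 < √r` this needs time of
order `r log r`; if `h + 1 ≥ √r` the second term is already of that order.

Since `mixTime` is an infimum, with value `0` on the empty set, one also has to know that the walk
mixes at all, that is, that it is irreducible on `V_r(H)`. A tuple generates `H` as soon as its
projection spans `W`, because commutators of lifts fill the centre. As `r > h`, some entry is always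
redundant; it can be changed to any element of `H`, and exchange arguments then connect any two
generating tuples.
-/

section MarkovChains

open Matrix Filter Topology

variable {X : Type*} [Fintype X]

lemma sum_sub_sum_le_tvDist {f g : X → ℝ} (hfg : ∑ x, f x = ∑ x, g x) (A : Finset X) :
    ∑ x ∈ A, g x - ∑ x ∈ A, f x ≤ tvDist f g := by
  classical
  have hf := sum_add_sum_compl A f
  have hg := sum_add_sum_compl A g
  have habs := sum_add_sum_compl A fun x ↦ |f x - g x|
  have hA : ∑ x ∈ A, (g x - f x) ≤ ∑ x ∈ A, |f x - g x| :=
    sum_le_sum fun x _ ↦ abs_sub_comm (f x) (g x) ▸ le_abs_self _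
  have hAc : ∑ x ∈ Aᶜ, (f x - g x) ≤ ∑ x ∈ Aᶜ, |f x - g x| := sum_le_sum fun x _ ↦ le_abs_self _
  rw [sum_sub_distrib] at hA hAc
  rw [tvDist]
  linarith

lemma tvDist_le_one {f g : X → ℝ} (hf : f ∈ stdSimplex ℝ X) (hg : g ∈ stdSimplex ℝ X) :
    tvDist f g ≤ 1 := by
  have h : ∑ x, |f x - g x| ≤ ∑ x, (f x + g x) := sum_le_sum fun x _ ↦ by
    rw [abs_le]; constructor <;> linarith [hf.1 x, hg.1 x]
  rw [sum_add_distrib, hf.2, hg.2] at h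
  rw [tvDist]
  linarith

section Uniform

lemma sum_unifOn_le (Ω : Set X) (B : Finset X) : ∑ x ∈ B, unifOn Ω x ≤ #B * (Nat.card Ω : ℝ)⁻¹ := by
  rw [← nsmul_eq_mul]
  refine sum_le_card_nsmul _ _ _ fun x _ ↦ ?_
  rw [unifOn]
  split_ifs
  exacts [le_rfl, by positivity]

lemma unifOn_mem_stdSimplex {Ω : Set X} (hΩ : Ω.Nonempty) : unifOn Ω ∈ stdSimplex ℝ X := by
  classical
  have : Nonempty Ω := hΩ.to_subtype
  refine ⟨fun x ↦ by rw [unifOn]; split_ifs <;> positivity, ?_⟩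
  simp only [unifOn]
  rw [← sum_filter, sum_const, nsmul_eq_mul, ← Fintype.card_subtype, ← Nat.card_eq_fintype_card]
  exact mul_inv_cancel₀ (by exact_mod_cast Nat.card_pos.ne')

/-- `Ω` is a closed class of the chain with transition matrix `Q`: no step leaves it. -/
def IsClosedClass (Q : Matrix X X ℝ) (Ω : Set X) : Prop := ∀ x ∈ Ω, ∀ y ∉ Ω, Q x y = 0

lemma IsClosedClass.pow [DecidableEq X] {Q : Matrix X X ℝ} {Ω : Set X} (hΩ : IsClosedClass Q Ω)
    (t : ℕ) : IsClosedClass (Q ^ t) Ω := by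
  induction t with
  | zero => exact fun x hx y hy ↦ one_apply_ne (ne_of_mem_of_not_mem hx hy)
  | succ t ih =>
    intro x hx y hy
    rw [pow_succ, mul_apply]
    refine sum_eq_zero fun z _ ↦ ?_
    by_cases hz : z ∈ Ω
    · rw [hΩ z hz y hy, mul_zero]
    · rw [ih x hx z hz, zero_mul]

lemma unifOn_vecMul [DecidableEq X] {Q : Matrix X X ℝ} {Ω : Set X} (hQ : Q ∈ rowStochastic ℝ X)
    (hsymm : Q.IsSymm) (hΩ : IsClosedClass Q Ω) : unifOn Ω ᵥ* Q = unifOn Ω := by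
  ext y
  have hmass : ∀ x, unifOn Ω x * Q x y = unifOn Ω y * Q y x := by
    intro x
    by_cases hx : x ∈ Ω <;> by_cases hy : y ∈ Ω
    · simp only [unifOn, hx, hy, hsymm.apply]
    · simp [unifOn, hy, hΩ x hx y hy]
    · simp [unifOn, hx, hΩ y hy x hx]
    · simp [unifOn, hx, hy]
  simp only [vecMul, dotProduct, hmass, ← mul_sum, sum_row_of_mem_rowStochastic hQ, mul_one]

end Uniform

section Convergence

lemma sum_abs_vecMul_le {Y : Type*} [Fintype Y] {A : Matrix X Y ℝ} (hA : ∀ x, ∑ y, A x y = 1)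
    {μ : X → ℝ} (hμ : ∑ x, μ x = 0) {ν : Y → ℝ} (hν : ∀ x, μ x ≠ 0 → ∀ y, ν y ≤ A x y) :
    ∑ y, |(μ ᵥ* A) y| ≤ (1 - ∑ y, ν y) * ∑ x, |μ x| := by
  have hentry : ∀ y, |(μ ᵥ* A) y| ≤ ∑ x, |μ x| * (A x y - ν y) := by
    intro y
    have hsub : (μ ᵥ* A) y = ∑ x, μ x * (A x y - ν y) := by
      simp only [vecMul, dotProduct, mul_sub, sum_sub_distrib, ← sum_mul, hμ, zero_mul, sub_zero]
    rw [hsub]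
    refine (abs_sum_le_sum_abs _ _).trans (sum_le_sum fun x _ ↦ ?_)
    rw [abs_mul]
    by_cases hx : μ x = 0
    · simp [hx]
    · rw [abs_of_nonneg (sub_nonneg.2 (hν x hx y))]
  calc ∑ y, |(μ ᵥ* A) y| ≤ ∑ y, ∑ x, |μ x| * (A x y - ν y) := sum_le_sum fun y _ ↦ hentry y
    _ = ∑ x, |μ x| * (∑ y, A x y - ∑ y, ν y) := by
      rw [sum_comm]; simp only [← mul_sum, sum_sub_distrib]
    _ = (1 - ∑ y, ν y) * ∑ x, |μ x| := by simp only [hA, ← sum_mul, mul_comm]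

lemma exists_minorization {Ω : Set X} {π : X → ℝ} {A : Matrix X X ℝ}
    (hA : ∀ x y, 0 ≤ A x y) (hpos : ∀ x ∈ Ω, ∀ y ∈ Ω, 0 < A x y)
    (hπ : π ∈ stdSimplex ℝ X) (hπΩ : ∀ y ∉ Ω, π y = 0) :
    ∃ ε > 0, ∀ x ∈ Ω, ∀ y, ε * π y ≤ A x y := by
  have hsmall : ∀ᶠ ε in 𝓝[>] (0 : ℝ), ∀ a : Ω × Ω, ε ≤ A a.1 a.2 :=
    eventually_all.2 fun a ↦ mem_of_superset (Ioc_mem_nhdsGT (hpos _ a.1.2 _ a.2.2)) fun _ h ↦ h.2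
  obtain ⟨ε, hle, hε⟩ := (hsmall.and self_mem_nhdsWithin).exists
  refine ⟨ε, hε, fun x hx y ↦ ?_⟩
  by_cases hy : y ∈ Ω
  · have hπ1 : π y ≤ 1 := hπ.2 ▸ single_le_sum (fun z _ ↦ hπ.1 z) (mem_univ y)
    exact (mul_le_of_le_one_right (le_of_lt hε) hπ1).trans (hle (⟨x, hx⟩, ⟨y, hy⟩))
  · simpa [hπΩ y hy] using hA x y

variable [DecidableEq X] {Q : Matrix X X ℝ} {Ω : Set X} {π : X → ℝ}

lemma row_mem_stdSimplex (hQ : Q ∈ rowStochastic ℝ X) (x : X) : Q x ∈ stdSimplex ℝ X :=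
  ⟨fun _ ↦ nonneg_of_mem_rowStochastic hQ, sum_row_of_mem_rowStochastic hQ x⟩

lemma tvDist_pow_le_of_minorization (hQ : Q ∈ rowStochastic ℝ X) (hΩ : IsClosedClass Q Ω)
    (hπ : π ∈ stdSimplex ℝ X) (hπΩ : ∀ y ∉ Ω, π y = 0) (hstat : π ᵥ* Q = π) {ε : ℝ}
    (hε : ∀ x ∈ Ω, ∀ y, ε * π y ≤ Q x y) {x : X} (hx : x ∈ Ω) (k : ℕ) :
    tvDist ((Q ^ k) x) π ≤ (1 - ε) ^ k := by
  have hε1 : ε ≤ 1 := by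
    have h : ∑ y, ε * π y ≤ ∑ y, Q x y := sum_le_sum fun y _ ↦ hε x hx y
    rwa [← mul_sum, hπ.2, mul_one, sum_row_of_mem_rowStochastic hQ] at h
  induction k with
  | zero => simpa using tvDist_le_one (row_mem_stdSimplex (one_mem _) x) hπ
  | succ k ih =>
    set μ : X → ℝ := (Q ^ k) x - π with hμ
    have hstep : (Q ^ (k + 1)) x - π = μ ᵥ* Q := by
      rw [hμ, sub_vecMul, hstat, pow_succ, mul_apply_eq_vecMul]
    have hsum : ∑ z, μ z = 0 := by
      simp [hμ, sum_row_of_mem_rowStochastic (pow_mem hQ k), hπ.2]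
    have hsupp : ∀ z, μ z ≠ 0 → ∀ y, ε * π y ≤ Q z y := fun z hz ↦ hε z <| by
      by_contra hzΩ
      exact hz (by simp [hμ, hΩ.pow k x hx z hzΩ, hπΩ z hzΩ])
    have hcontr := sum_abs_vecMul_le (sum_row_of_mem_rowStochastic hQ) hsum hsupp
    rw [← mul_sum, hπ.2, mul_one, ← hstep] at hcontr
    calc tvDist ((Q ^ (k + 1)) x) π ≤ (1 - ε) * tvDist ((Q ^ k) x) π := by
          simp only [tvDist, hμ, Pi.sub_apply] at hcontr ⊢; linarith
      _ ≤ (1 - ε) * (1 - ε) ^ k := mul_le_mul_of_nonneg_left ih (sub_nonneg.2 hε1)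
      _ = (1 - ε) ^ (k + 1) := (pow_succ' _ _).symm

lemma pow_succ_apply_pos (hQ : ∀ x y, 0 ≤ Q x y) {n : ℕ} {x y z : X} (hxy : 0 < (Q ^ n) x y)
    (hyz : 0 < Q y z) : 0 < (Q ^ (n + 1)) x z := by
  rw [pow_succ, mul_apply]
  exact sum_pos' (fun w _ ↦ mul_nonneg (pow_apply_nonneg hQ n _ _) (hQ _ _))
    ⟨y, mem_univ y, mul_pos hxy hyz⟩

lemma eventually_pow_apply_pos (hQ : ∀ x y, 0 ≤ Q x y) (hdiag : ∀ x, 0 < Q x x) {x y : X}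
    (hxy : Relation.ReflTransGen (fun a b ↦ 0 < Q a b) x y) : ∀ᶠ n in atTop, 0 < (Q ^ n) x y := by
  obtain ⟨n, hn⟩ : ∃ n, 0 < (Q ^ n) x y := by
    induction hxy with
    | refl => exact ⟨0, by simp⟩
    | tail _ hstep ih =>
      obtain ⟨n, hn⟩ := ih
      exact ⟨n + 1, pow_succ_apply_pos hQ hn hstep⟩
  filter_upwards [eventually_ge_atTop n] with m hm
  induction m, hm using Nat.le_induction with
  | base => exact hn
  | succ m _ ih => exact pow_succ_apply_pos hQ ih (hdiag y)

theorem exists_forall_tvDist_pow_le (hQ : Q ∈ rowStochastic ℝ X) (hdiag : ∀ x, 0 < Q x x)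
    (hΩ : IsClosedClass Q Ω)
    (hirr : ∀ x ∈ Ω, ∀ y ∈ Ω, Relation.ReflTransGen (fun a b ↦ 0 < Q a b) x y)
    (hπ : π ∈ stdSimplex ℝ X) (hπΩ : ∀ y ∉ Ω, π y = 0) (hstat : π ᵥ* Q = π) {δ : ℝ} (hδ : 0 < δ) :
    ∃ t, ∀ x ∈ Ω, tvDist ((Q ^ t) x) π ≤ δ := by
  have hpos : ∀ᶠ n in atTop, ∀ a : Ω × Ω, 0 < (Q ^ n) a.1 a.2 :=
    eventually_all.2 fun a ↦ eventually_pow_apply_pos hQ.1 hdiag (hirr _ a.1.2 _ a.2.2)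
  obtain ⟨N, hN⟩ := hpos.exists
  have hQN := pow_mem hQ N
  have hstatN : π ᵥ* Q ^ N = π := by
    clear hN hQN
    induction N with
    | zero => simp
    | succ N ih => rw [pow_succ, ← vecMul_vecMul, ih, hstat]
  obtain ⟨ε, hε, hmin⟩ := exists_minorization hQN.1
    (fun x hx y hy ↦ hN (⟨x, hx⟩, ⟨y, hy⟩)) hπ hπΩ
  obtain ⟨k, hk⟩ := exists_pow_lt_of_lt_one hδ (sub_lt_self (1 : ℝ) hε)
  refine ⟨N * k, fun x hx ↦ ?_⟩
  rw [pow_mul]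
  exact (tvDist_pow_le_of_minorization hQN (hΩ.pow N) hπ hπΩ hstatN hmin hx k).trans hk.le

lemma tvDist_pow_mixTime_le (h : ∃ t, ∀ x ∈ Ω, tvDist ((Q ^ t) x) π ≤ 1 / 4) {x : X} (hx : x ∈ Ω) :
    tvDist ((Q ^ mixTime Q π Ω) x) π ≤ 1 / 4 :=
  Nat.sInf_mem (s := {t | ∀ x ∈ Ω, tvDist ((Q ^ t) x) π ≤ 1 / 4}) h x hx

end Convergence

section LowerBounds

variable [DecidableEq X] {Q : Matrix X X ℝ}

lemma card_pow_ne_zero_le {M : ℕ} (hM : ∀ x, #{y | Q x y ≠ 0} ≤ M) (x : X) (t : ℕ) :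
    #{y | (Q ^ t) x y ≠ 0} ≤ M ^ t := by
  induction t with
  | zero =>
    rw [pow_zero, pow_zero, card_le_one]
    simp +contextual [one_apply, eq_comm]
  | succ t ih =>
    have hsub : ({y | (Q ^ (t + 1)) x y ≠ 0} : Finset X) ⊆
        ({z | (Q ^ t) x z ≠ 0} : Finset X).biUnion fun z ↦ {y | Q z y ≠ 0} := by
      intro y hy
      rw [mem_filter_univ, pow_succ, mul_apply] at hy
      obtain ⟨z, -, hz⟩ := exists_ne_zero_of_sum_ne_zero hy
      simp only [mem_biUnion, mem_filter_univ]
      exact ⟨z, left_ne_zero_of_mul hz, right_ne_zero_of_mul hz⟩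
    calc _ ≤ _ := card_le_card hsub
      _ ≤ #{z | (Q ^ t) x z ≠ 0} * M := card_biUnion_le_card_mul _ _ M fun z _ ↦ hM z
      _ ≤ M ^ (t + 1) := by rw [pow_succ]; gcongr

theorem card_le_pow_of_tvDist_unifOn_le (hQ : Q ∈ rowStochastic ℝ X) {M : ℕ}
    (hM : ∀ x, #{y | Q x y ≠ 0} ≤ M) {Ω : Set X} (hΩ : Ω.Nonempty) {δ : ℝ} {x : X} {t : ℕ}
    (h : tvDist ((Q ^ t) x) (unifOn Ω) ≤ δ) : (1 - δ) * Nat.card Ω ≤ (M : ℝ) ^ t := by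
  have : Nonempty Ω := hΩ.to_subtype
  have hcard : (0 : ℝ) < Nat.card Ω := by exact_mod_cast Nat.card_pos
  have hπ := unifOn_mem_stdSimplex hΩ
  have hrow := row_mem_stdSimplex (pow_mem hQ t) x
  have hcompl := sum_sub_sum_le_tvDist (hrow.2.trans hπ.2.symm) {y | ¬ (Q ^ t) x y ≠ 0}
  have hzero : ∑ y with ¬ (Q ^ t) x y ≠ 0, (Q ^ t) x y = 0 :=
    sum_eq_zero fun y hy ↦ by simpa using hy
  have hsplit := sum_filter_add_sum_filter_not univ (fun y ↦ (Q ^ t) x y ≠ 0) (unifOn Ω)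
  rw [hπ.2] at hsplit
  have hsupp := sum_unifOn_le Ω {y | (Q ^ t) x y ≠ 0}
  have hpow : (#{y | (Q ^ t) x y ≠ 0} : ℝ) ≤ (M : ℝ) ^ t := by
    exact_mod_cast card_pow_ne_zero_le hM x t
  rw [← le_div_iff₀ hcard]
  calc 1 - δ ≤ #{y | (Q ^ t) x y ≠ 0} * (Nat.card Ω : ℝ)⁻¹ := by linarith
    _ ≤ (M : ℝ) ^ t / Nat.card Ω := by rw [← div_eq_mul_inv]; gcongr

lemma pow_mulVec_le (hQ : ∀ x y, 0 ≤ Q x y) {f : X → ℝ} {c : ℝ} (hc : 0 ≤ c)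
    (hf : ∀ x, (Q *ᵥ f) x ≤ c * f x) (x : X) (t : ℕ) : (Q ^ t *ᵥ f) x ≤ c ^ t * f x := by
  induction t generalizing x with
  | zero => simp
  | succ t ih =>
    calc (Q ^ (t + 1) *ᵥ f) x = ∑ z, Q x z * (Q ^ t *ᵥ f) z := by
          rw [pow_succ', ← mulVec_mulVec]; rfl
      _ ≤ ∑ z, Q x z * (c ^ t * f z) :=
          sum_le_sum fun z _ ↦ mul_le_mul_of_nonneg_left (ih z) (hQ x z)
      _ = c ^ t * (Q *ᵥ f) x := by
          simp only [mulVec, dotProduct, mul_sum]; exact sum_congr rfl fun z _ ↦ by ring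
      _ ≤ c ^ (t + 1) * f x := by
          rw [pow_succ, mul_assoc]; exact mul_le_mul_of_nonneg_left (hf x) (pow_nonneg hc t)

theorem mul_le_pow_mul_of_tvDist_le (hQ : Q ∈ rowStochastic ℝ X) {f : X → ℝ} (hf₀ : ∀ x, 0 ≤ f x)
    {c : ℝ} (hc : 0 ≤ c) (hf : ∀ x, (Q *ᵥ f) x ≤ c * f x) {π : X → ℝ} (hπ : π ∈ stdSimplex ℝ X)
    {δ : ℝ} {x : X} {t : ℕ} (h : tvDist ((Q ^ t) x) π ≤ δ) {a : ℝ} (ha : 0 ≤ a) :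
    (1 - δ - ∑ y with f y < a, π y) * a ≤ c ^ t * f x := by
  have hrow := row_mem_stdSimplex (pow_mem hQ t) x
  have hlarge := sum_sub_sum_le_tvDist (hrow.2.trans hπ.2.symm) {y | ¬ f y < a}
  have hsplit := sum_filter_add_sum_filter_not univ (f · < a) π
  rw [hπ.2] at hsplit
  calc (1 - δ - ∑ y with f y < a, π y) * a ≤ (∑ y with ¬ f y < a, (Q ^ t) x y) * a := by
        gcongr; linarith
    _ ≤ ∑ y with ¬ f y < a, (Q ^ t) x y * f y := by
        rw [sum_mul]
        refine sum_le_sum fun y hy ↦ mul_le_mul_of_nonneg_left ?_ (hrow.1 y)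
        exact not_lt.1 ((mem_filter_univ y).1 hy)
    _ ≤ (Q ^ t *ᵥ f) x :=
        sum_le_univ_sum_of_nonneg fun y ↦ mul_nonneg (hrow.1 y) (hf₀ y)
    _ ≤ c ^ t * f x := pow_mulVec_le hQ.1 hc hf x t

end LowerBounds

end MarkovChains

section ProductReplacement

open Matrix Function

section Moves

variable {ι H : Type*} [DecidableEq ι] [Group H]

/-- The right move of product replacement: `g i` is replaced by `g i * g j ^ n`. -/
def rightMove (g : ι → H) (i j : ι) (n : ℕ) : ι → H := update g i (g i * g j ^ n)

/-- The left move of product replacement: `g i` is replaced by `g j ^ n * g i`. -/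
def leftMove (g : ι → H) (i j : ι) (n : ℕ) : ι → H := update g i (g j ^ n * g i)

lemma pow_val_neg {p : ℕ} [NeZero p] {x : H} (hx : x ^ p = 1) (a : ZMod p) :
    x ^ (-a).val = (x ^ a.val)⁻¹ := by
  obtain ⟨k, hk⟩ : p ∣ (-a).val + a.val := by
    rw [← ZMod.natCast_eq_zero_iff]
    simp
  rw [eq_inv_iff_mul_eq_one, ← pow_add, hk, pow_mul, hx, one_pow]

section Symmetry

variable {p : ℕ} [NeZero p] (hexp : ∀ x : H, x ^ p = 1) {i j : ι} (hij : i ≠ j)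

include hexp hij

lemma rightMove_neg_rightMove (g : ι → H) (a : ZMod p) :
    rightMove (rightMove g i j a.val) i j (-a).val = g := by
  rw [rightMove, rightMove, update_of_ne hij.symm, update_self, update_idem,
    pow_val_neg (hexp _), mul_inv_cancel_right, update_eq_self]

lemma leftMove_neg_leftMove (g : ι → H) (a : ZMod p) :
    leftMove (leftMove g i j a.val) i j (-a).val = g := by
  rw [leftMove, leftMove, update_of_ne hij.symm, update_self, update_idem,
    pow_val_neg (hexp _), inv_mul_cancel_left, update_eq_self]

lemma eq_rightMove_comm {g g' : ι → H} {a : ZMod p} :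
    g' = rightMove g i j a.val ↔ g = rightMove g' i j (-a).val := by
  constructor <;> rintro rfl
  · exact (rightMove_neg_rightMove hexp hij g a).symm
  · simpa using (rightMove_neg_rightMove hexp hij g' (-a)).symm

lemma eq_leftMove_comm {g g' : ι → H} {a : ZMod p} :
    g' = leftMove g i j a.val ↔ g = leftMove g' i j (-a).val := by
  constructor <;> rintro rfl
  · exact (leftMove_neg_leftMove hexp hij g a).symm
  · simpa using (leftMove_neg_leftMove hexp hij g' (-a)).symm

end Symmetry

lemma update_mul_mul_mem_genSet {r : ℕ} {g : Fin r → H} (hg : g ∈ genSet r H) {i : Fin r} {x y : H}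
    (hx : x ∈ Subgroup.closure (g '' {i}ᶜ)) (hy : y ∈ Subgroup.closure (g '' {i}ᶜ)) :
    update g i (x * g i * y) ∈ genSet r H := by
  set K := Subgroup.closure (Set.range (update g i (x * g i * y)))
  have hK : ∀ k, update g i (x * g i * y) k ∈ K := fun k ↦ Subgroup.subset_closure ⟨k, rfl⟩
  have hne : ∀ k ≠ i, g k ∈ K := fun k hk ↦ by simpa [hk] using hK k
  have hle : Subgroup.closure (g '' {i}ᶜ) ≤ K :=
    (Subgroup.closure_le K).2 (Set.image_subset_iff.2 hne)
  have hi : g i ∈ K := by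
    have := hK i
    rwa [update_self, K.mul_mem_cancel_right (hle hy), K.mul_mem_cancel_left (hle hx)] at this
  refine eq_top_iff.2 (hg.ge.trans ((Subgroup.closure_le K).2 ?_))
  rintro _ ⟨k, rfl⟩
  obtain rfl | hk := eq_or_ne k i
  exacts [hi, hne k hk]

variable {r : ℕ} {g : Fin r → H} (hg : g ∈ genSet r H) {i j : Fin r} (hij : i ≠ j) (n : ℕ)

include hg hij

lemma rightMove_mem_genSet : rightMove g i j n ∈ genSet r H := by
  have hj : g j ^ n ∈ Subgroup.closure (g '' {i}ᶜ) :=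
    pow_mem (Subgroup.subset_closure (Set.mem_image_of_mem g (by simpa using hij.symm))) n
  simpa [rightMove] using update_mul_mul_mem_genSet hg (one_mem _) hj

lemma leftMove_mem_genSet : leftMove g i j n ∈ genSet r H := by
  have hj : g j ^ n ∈ Subgroup.closure (g '' {i}ᶜ) :=
    pow_mem (Subgroup.subset_closure (Set.mem_image_of_mem g (by simpa using hij.symm))) n
  simpa [leftMove] using update_mul_mul_mem_genSet hg hj (one_mem _)

end Moves

section Kernel

variable {p : ℕ} [Fact p.Prime] {r : ℕ} {H : Type*} [Group H] [Fintype H] [DecidableEq H]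

lemma paP_apply (g g' : Fin r → H) :
    paP p r H g g' = (∑ x ∈ (univ : Finset (Fin r)).offDiag, ∑ a : ZMod p,
      ((if g' = rightMove g x.1 x.2 a.val then 1 else 0) +
        (if g' = leftMove g x.1 x.2 a.val then 1 else 0))) / (2 * p * r * (r - 1)) := by
  rw [paP, ← sum_product', univ_product_univ, ← sum_subset (subset_univ (univ.offDiag))]
  · congr 1
    refine sum_congr rfl fun x hx ↦ sum_congr rfl fun a _ ↦ ?_
    have hne := (mem_offDiag.1 hx).2.2
    congr 1 <;> exact if_congr (and_iff_right hne) rfl rfl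
  · rintro x - hx
    have : x.1 = x.2 := by simpa using hx
    simp [this]

lemma paP_mulVec (f : (Fin r → H) → ℝ) (g : Fin r → H) :
    (paP p r H *ᵥ f) g = (∑ x ∈ (univ : Finset (Fin r)).offDiag, ∑ a : ZMod p,
      (f (rightMove g x.1 x.2 a.val) + f (leftMove g x.1 x.2 a.val))) / (2 * p * r * (r - 1)) := by
  simp only [mulVec, dotProduct, paP_apply, div_mul_eq_mul_div, ← sum_div, sum_mul]
  rw [sum_comm]
  congr 1
  refine sum_congr rfl fun x _ ↦ ?_
  rw [sum_comm]
  simp [add_mul, sum_add_distrib]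

lemma paP_apply_nonneg (hr : 1 ≤ r) (g g' : Fin r → H) : 0 ≤ paP p r H g g' := by
  have hr' : (1 : ℝ) ≤ r := by exact_mod_cast hr
  rw [paP_apply]
  exact div_nonneg (sum_nonneg fun _ _ ↦ sum_nonneg fun _ _ ↦ by positivity)
    (mul_nonneg (by positivity) (by linarith))

lemma sum_offDiag_snd (φ : Fin r → ℝ) :
    ∑ x ∈ (univ : Finset (Fin r)).offDiag, φ x.2 = (r - 1) * ∑ j, φ j := by
  have hdiag : ∑ x ∈ (univ : Finset (Fin r)).diag, φ x.2 = ∑ j, φ j := by simp [sum_diag]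
  have hall : ∑ x ∈ (univ : Finset (Fin r)) ×ˢ univ, φ x.2 = r * ∑ j, φ j := by
    rw [sum_product]
    simp
  rw [← diag_union_offDiag, sum_union (disjoint_diag_offDiag _), hdiag] at hall
  linarith

lemma paP_mulVec_le (hr : 2 ≤ r) {f : (Fin r → H) → ℝ} {g : Fin r → H} {B : Fin r → ℝ}
    (hright : ∀ i j n, f (rightMove g i j n) ≤ B j) (hleft : ∀ i j n, f (leftMove g i j n) ≤ B j) :
    (paP p r H *ᵥ f) g ≤ (∑ j, B j) / r := by
  have hr' : (0 : ℝ) < r - 1 := by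
    have : (2 : ℝ) ≤ r := by exact_mod_cast hr
    linarith
  have hp : (0 : ℝ) < p := by exact_mod_cast (Fact.out : p.Prime).pos
  calc (paP p r H *ᵥ f) g
      ≤ (∑ x ∈ (univ : Finset (Fin r)).offDiag, ∑ _ : ZMod p, (B x.2 + B x.2)) /
          (2 * p * r * (r - 1)) := by
        rw [paP_mulVec]
        gcongr
        exacts [hright _ _ _, hleft _ _ _]
    _ = (p * 2 * ((r - 1) * ∑ j, B j)) / (2 * p * r * (r - 1)) := by
        simp only [sum_const, card_univ, ZMod.card, nsmul_eq_mul, ← two_mul, ← mul_sum,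
          sum_offDiag_snd, mul_assoc]
    _ = (∑ j, B j) / r := by field_simp

lemma paP_mem_rowStochastic (hr : 2 ≤ r) : paP p r H ∈ rowStochastic ℝ (Fin r → H) := by
  have hr0 : (r : ℝ) ≠ 0 := by positivity
  refine ⟨paP_apply_nonneg (by omega), funext fun g ↦ le_antisymm ?_ ?_⟩
  · simpa [hr0] using
      paP_mulVec_le (p := p) hr (g := g) (f := 1) (B := fun _ ↦ 1) (by simp) (by simp)
  · simpa [hr0, mulVec_neg] using
      paP_mulVec_le (p := p) hr (g := g) (f := -1) (B := fun _ ↦ -1) (by simp) (by simp)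

lemma paP_isSymm (hexp : ∀ x : H, x ^ p = 1) : (paP p r H).IsSymm := by
  ext g g'
  rw [transpose_apply, paP_apply, paP_apply]
  congr 1
  refine sum_congr rfl fun x hx ↦ ?_
  rw [← Equiv.sum_comp (Equiv.neg (ZMod p))]
  refine sum_congr rfl fun a _ ↦ ?_
  have hne := (mem_offDiag.1 hx).2.2
  simp only [Equiv.neg_apply, ← eq_rightMove_comm hexp hne, ← eq_leftMove_comm hexp hne]

lemma exists_move_of_paP_apply_ne_zero {g g' : Fin r → H} (h : paP p r H g g' ≠ 0) :
    ∃ i j, i ≠ j ∧ ∃ a : ZMod p, g' = rightMove g i j a.val ∨ g' = leftMove g i j a.val := by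
  rw [paP_apply] at h
  obtain ⟨x, hx, hsum⟩ := exists_ne_zero_of_sum_ne_zero (div_ne_zero_iff.1 h).1
  obtain ⟨a, -, ha⟩ := exists_ne_zero_of_sum_ne_zero hsum
  refine ⟨x.1, x.2, (mem_offDiag.1 hx).2.2, a, ?_⟩
  contrapose! ha
  simp [ha]

lemma paP_apply_update_mul_pos {i j : Fin r} (hij : i ≠ j) (g : Fin r → H) :
    0 < paP p r H g (update g i (g i * g j)) := by
  have hr : (0 : ℝ) < r - 1 := by
    have : Nontrivial (Fin r) := ⟨i, j, hij⟩
    have : (1 : ℝ) < r := by exact_mod_cast Fin.nontrivial_iff_two_le.1 this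
    linarith
  have hp : (0 : ℝ) < p := by exact_mod_cast (Fact.out : p.Prime).pos
  have : Fact (1 < p) := ⟨(Fact.out : p.Prime).one_lt⟩
  rw [paP_apply]
  refine div_pos (sum_pos' (fun _ _ ↦ sum_nonneg fun _ _ ↦ by positivity) ⟨(i, j), by simpa,
    sum_pos' (fun _ _ ↦ by positivity) ⟨1, mem_univ _, ?_⟩⟩) (mul_pos ?_ hr)
  · rw [if_pos (by simp [rightMove, ZMod.val_one])]
    positivity
  · exact mul_pos (by positivity) (by linarith)

lemma paQ_apply (g g' : Fin r → H) :
    paQ p r H g g' = 2⁻¹ * ((1 : Matrix (Fin r → H) (Fin r → H) ℝ) g g' + paP p r H g g') :=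
  rfl

lemma paQ_mulVec (f : (Fin r → H) → ℝ) : paQ p r H *ᵥ f = (2⁻¹ : ℝ) • (f + paP p r H *ᵥ f) := by
  rw [paQ, smul_mulVec, add_mulVec, one_mulVec]

lemma paQ_mem_rowStochastic (hr : 2 ≤ r) : paQ p r H ∈ rowStochastic ℝ (Fin r → H) := by
  rw [paQ, smul_add]
  exact convex_rowStochastic (one_mem _) (paP_mem_rowStochastic hr) (by positivity) (by positivity)
    (by norm_num)

lemma paQ_isSymm (hexp : ∀ x : H, x ^ p = 1) : (paQ p r H).IsSymm :=
  (isSymm_one.add (paP_isSymm hexp)).smul _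

lemma paQ_apply_self_pos (hr : 1 ≤ r) (g : Fin r → H) : 0 < paQ p r H g g := by
  rw [paQ_apply, one_apply_eq]
  linarith [paP_apply_nonneg (p := p) hr g g]

lemma paQ_apply_update_mul_pos {i j : Fin r} (hij : i ≠ j) (g : Fin r → H) :
    0 < paQ p r H g (update g i (g i * g j)) := by
  rw [paQ_apply, one_apply]
  have := paP_apply_update_mul_pos (p := p) hij g
  positivity

lemma reflTransGen_paQ_update_mul {g : Fin r → H} {i : Fin r} {y : H}
    (hy : y ∈ Subgroup.closure (g '' {i}ᶜ)) (x : H) :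
    Relation.ReflTransGen (fun a b ↦ 0 < paQ p r H a b) (update g i x) (update g i (x * y)) := by
  rw [← Subgroup.mem_toSubmonoid, Subgroup.closure_toSubmonoid_of_finite] at hy
  induction hy using Submonoid.closure_induction generalizing x with
  | mem y hy =>
    obtain ⟨j, hj, rfl⟩ := hy
    have hstep := paQ_apply_update_mul_pos (p := p) (Ne.symm hj) (update g i x)
    rw [update_idem, update_self, update_of_ne hj] at hstep
    exact .single hstep
  | one => simp [Relation.ReflTransGen.refl]
  | mul y z _ _ ihy ihz => exact (ihy x).trans (mul_assoc x y z ▸ ihz (x * y))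

lemma reflTransGen_paQ_update {g : Fin r → H} {i : Fin r}
    (hi : Subgroup.closure (g '' {i}ᶜ) = ⊤) (x : H) :
    Relation.ReflTransGen (fun a b ↦ 0 < paQ p r H a b) g (update g i x) := by
  have hpath := reflTransGen_paQ_update_mul (p := p) (g := g) (y := (g i)⁻¹ * x)
    (hi ▸ Subgroup.mem_top _) (g i)
  rwa [update_eq_self, mul_inv_cancel_left] at hpath

lemma isClosedClass_genSet : IsClosedClass (paQ p r H) (genSet r H) := by
  intro g hg g' hg'
  rw [paQ_apply, one_apply_ne (ne_of_mem_of_not_mem hg hg')]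
  by_contra h
  obtain ⟨i, j, hij, a, rfl | rfl⟩ :=
    exists_move_of_paP_apply_ne_zero (p := p) (g := g) (g' := g') fun h0 ↦ h (by simp [h0])
  exacts [hg' (rightMove_mem_genSet hg hij _), hg' (leftMove_mem_genSet hg hij _)]

lemma card_paQ_ne_zero_le (g : Fin r → H) :
    #{g' | paQ p r H g g' ≠ 0} ≤ 2 * p * r ^ 2 + 1 := by
  set R := univ.image fun x : Fin r × Fin r × ZMod p ↦ rightMove g x.1 x.2.1 x.2.2.val
  set L := univ.image fun x : Fin r × Fin r × ZMod p ↦ leftMove g x.1 x.2.1 x.2.2.val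
  have hR : #R ≤ r * (r * p) := card_image_le.trans (by simp)
  have hL : #L ≤ r * (r * p) := card_image_le.trans (by simp)
  have hsub : ({g' | paQ p r H g g' ≠ 0} : Finset (Fin r → H)) ⊆ (R ∪ L) ∪ {g} := by
    intro g' hg'
    rw [mem_filter_univ, paQ_apply, one_apply] at hg'
    simp only [R, L, mem_union, mem_image_univ_iff_mem_range, Set.mem_range, Prod.exists,
      mem_singleton]
    by_cases hgg' : g' = g
    · exact Or.inr hgg'
    · rw [if_neg (Ne.symm hgg'), zero_add] at hg'
      obtain ⟨i, j, -, a, h | h⟩ := exists_move_of_paP_apply_ne_zero (right_ne_zero_of_mul hg')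
      exacts [Or.inl (Or.inl ⟨i, j, a, h.symm⟩), Or.inl (Or.inr ⟨i, j, a, h.symm⟩)]
  calc _ ≤ _ := card_le_card hsub
    _ ≤ #R + #L + 1 := (card_union_le _ _).trans (by gcongr; exacts [card_union_le _ _, le_rfl])
    _ ≤ 2 * p * r ^ 2 + 1 := by linarith

end Kernel

section NontrivialEntries

/-- The number of entries of a tuple that differ from `1`, the drift function of the walk. -/
def numNontrivial {ι H : Type*} [Fintype ι] [One H] [DecidableEq H] (g : ι → H) : ℕ :=
  #{i | g i ≠ 1}

lemma numNontrivial_update_le {ι H : Type*} [Fintype ι] [DecidableEq ι] [One H] [DecidableEq H]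
    (g : ι → H) (i : ι) (x : H) : numNontrivial (update g i x) ≤ numNontrivial g + 1 := by
  refine (card_le_card fun k hk ↦ ?_).trans (card_insert_le i _)
  obtain rfl | hki := eq_or_ne k i
  · exact mem_insert_self _ _
  · exact mem_insert_of_mem (by simpa [hki] using hk)

variable {ι H : Type*} [Fintype ι] [DecidableEq ι] [Group H] [DecidableEq H]

lemma numNontrivial_rightMove_le (g : ι → H) (i j : ι) (n : ℕ) :
    numNontrivial (rightMove g i j n) ≤ numNontrivial g + if g j ≠ 1 then 1 else 0 := by
  split_ifs with hj
  · exact numNontrivial_update_le g i _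
  · simp [rightMove, not_not.1 hj]

lemma numNontrivial_leftMove_le (g : ι → H) (i j : ι) (n : ℕ) :
    numNontrivial (leftMove g i j n) ≤ numNontrivial g + if g j ≠ 1 then 1 else 0 := by
  split_ifs with hj
  · exact numNontrivial_update_le g i _
  · simp [leftMove, not_not.1 hj]

lemma paQ_mulVec_numNontrivial_le {p : ℕ} [Fact p.Prime] {r : ℕ} (hr : 2 ≤ r) [Fintype H]
    (g : Fin r → H) :
    (paQ p r H *ᵥ fun g ↦ (numNontrivial g : ℝ)) g ≤ (1 + 1 / (2 * r)) * numNontrivial g := by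
  have hr0 : (r : ℝ) ≠ 0 := by positivity
  set B : Fin r → ℝ := fun j ↦ numNontrivial g + (if g j ≠ 1 then 1 else 0 : ℕ)
  have hB : ∑ j, B j = (r + 1) * numNontrivial g := by
    simp only [B, sum_add_distrib, Nat.cast_ite, Nat.cast_one, Nat.cast_zero, sum_boole,
      sum_const, card_univ, Fintype.card_fin, nsmul_eq_mul]
    rw [numNontrivial]
    ring
  have hstep : (paP p r H *ᵥ fun g ↦ (numNontrivial g : ℝ)) g ≤ (∑ j, B j) / r := by
    refine paP_mulVec_le hr (fun i j n ↦ ?_) fun i j n ↦ ?_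
    · simp only [B]
      exact_mod_cast numNontrivial_rightMove_le g i j n
    · simp only [B]
      exact_mod_cast numNontrivial_leftMove_le g i j n
  rw [paQ_mulVec]
  calc 2⁻¹ * (numNontrivial g + (paP p r H *ᵥ fun g ↦ (numNontrivial g : ℝ)) g)
      ≤ 2⁻¹ * (numNontrivial g + (∑ j, B j) / r) := by gcongr
    _ = (1 + 1 / (2 * r)) * numNontrivial g := by rw [hB]; field_simp; ring

end NontrivialEntries

end ProductReplacement

section RedundantCoordinates

open Function Submodule Relation

variable {K W ι : Type*} [Field K] [AddCommGroup W] [Module K W]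

/-- The vectors `v j` with `j ≠ i` already span, so that `v i` can be changed freely. -/
def IsRedundant (K : Type*) {W ι : Type*} [Field K] [AddCommGroup W] [Module K W] (v : ι → W)
    (i : ι) : Prop :=
  span K (v '' {i}ᶜ) = ⊤

variable {v : ι → W} {i j : ι}

lemma IsRedundant.update [DecidableEq ι] (h : IsRedundant K v i) (w : W) :
    IsRedundant K (update v i w) i := by
  rwa [IsRedundant, Set.image_congr fun (j : ι) (hj : j ∈ ({i}ᶜ : Set ι)) ↦ update_of_ne hj w v]

lemma IsRedundant.span_range (h : IsRedundant K v i) : span K (Set.range v) = ⊤ :=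
  eq_top_iff.2 (h.ge.trans (span_mono (Set.image_subset_range _ _)))

lemma isRedundant_of_mem_span (hv : span K (Set.range v) = ⊤) (hi : v i ∈ span K (v '' {i}ᶜ)) :
    IsRedundant K v i := by
  refine eq_top_iff.2 (hv.ge.trans (span_le.2 ?_))
  rintro _ ⟨j, rfl⟩
  obtain rfl | hj := eq_or_ne j i
  exacts [hi, subset_span ⟨j, hj, rfl⟩]

lemma isRedundant_of_eq (hv : span K (Set.range v) = ⊤) (hij : i ≠ j) (h : v i = v j) :
    IsRedundant K v i :=
  isRedundant_of_mem_span hv (h ▸ subset_span ⟨j, hij.symm, rfl⟩)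

lemma exists_isRedundant [Fintype ι] [FiniteDimensional K W]
    (hcard : Module.finrank K W < Fintype.card ι) (hv : span K (Set.range v) = ⊤) :
    ∃ i, IsRedundant K v i := by
  by_contra! h
  have hind : LinearIndependent K v := linearIndependent_iff_notMem_span.2 fun i hi ↦
    h i (isRedundant_of_mem_span hv (by rwa [Set.compl_eq_univ_sdiff]))
  exact hcard.not_ge hind.fintype_card_le_finrank

-- Expand `w` in the `v l` with `l ≠ i`: some `k ∉ C` must have a nonzero coefficient.
lemma IsRedundant.exists_exchange [DecidableEq ι] (hi : IsRedundant K v i) {C : Set ι} {w : W}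
    (hw : w ∉ span K (v '' C)) : ∃ k ∉ C, k ≠ i ∧ IsRedundant K (Function.update v i w) k := by
  obtain ⟨c, hc, hcw⟩ : ∃ c ∈ Finsupp.supported K K ({i}ᶜ : Set ι), c.sum (fun l a ↦ a • v l) = w :=
    (Finsupp.mem_span_image_iff_linearCombination K).1 (hi.ge (mem_top (x := w)))
  obtain ⟨k, hkc, hk⟩ : ∃ k ∈ c.support, c k • v k ∉ span K (v '' C) := by
    contrapose! hw
    exact hcw ▸ sum_mem hw
  have hkC : k ∉ C := fun h ↦ hk (smul_mem _ _ (subset_span ⟨k, h, rfl⟩))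
  have hki : k ≠ i := hc hkc
  set S := span K (Function.update v i w '' {k}ᶜ)
  have hwS : w ∈ S := subset_span ⟨i, hki.symm, update_self _ _ _⟩
  have hvS : ∀ l ≠ i, l ≠ k → v l ∈ S := fun l hli hlk ↦
    subset_span ⟨l, hlk, update_of_ne hli _ _⟩
  have hrest : ∑ l ∈ c.support.erase k, c l • v l ∈ S := sum_mem fun l hl ↦
    smul_mem _ _ (hvS l (hc (mem_of_mem_erase hl)) (ne_of_mem_erase hl))
  have hkS : v k ∈ S := by
    rw [← smul_mem_iff _ (Finsupp.mem_support_iff.1 hkc), ← S.add_mem_iff_left hrest,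
      add_sum_erase _ (fun l ↦ c l • v l) hkc]
    rwa [← hcw] at hwS
  refine ⟨k, hkC, hki, eq_top_iff.2 (hi.ge.trans (span_le.2 ?_))⟩
  rintro _ ⟨l, hl, rfl⟩
  obtain rfl | hlk := eq_or_ne l k
  exacts [hkS, hvS l hl hlk]

section HammingDist

variable {α : Type*} [Fintype ι] [DecidableEq ι] [DecidableEq α] {g g' : ι → α}

lemma hammingDist_update_le (hj : g j ≠ g' j) (x : α) :
    hammingDist (update g j x) g' ≤ hammingDist g g' := by
  refine card_le_card fun l hl ↦ ?_
  obtain rfl | hlj := eq_or_ne l j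
  · simpa using hj
  · simpa [hlj] using hl

lemma hammingDist_update_apply_lt (hj : g j ≠ g' j) :
    hammingDist (update g j (g' j)) g' < hammingDist g g' := by
  refine card_lt_card ((ssubset_iff_of_subset fun l hl ↦ ?_).2 ⟨j, by simpa using hj, by simp⟩)
  obtain rfl | hlj := eq_or_ne l j
  · simp at hl
  · simpa [hlj] using hl

lemma hammingDist_update_update_apply_lt {k : ι} (hj : g j ≠ g' j) (hk : g k ≠ g' k) (x : α) :
    hammingDist (update (update g k x) j (g' j)) g' < hammingDist g g' := by
  obtain rfl | hjk := eq_or_ne j k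
  · rw [update_idem]
    exact hammingDist_update_apply_lt hj
  · exact (hammingDist_update_apply_lt (by rwa [update_of_ne hjk])).trans_le
      (hammingDist_update_le hk x)

end HammingDist

section Connectivity

variable {α : Type*} [DecidableEq ι] {f : α → W} {g g' : ι → α}

/-- `g'` arises from `g` by an arbitrary change of one entry that is redundant for the spanning
property of the vectors `f (g i)`. -/
def RedundantUpdate (K : Type*) {W ι α : Type*} [Field K] [AddCommGroup W] [Module K W]
    [DecidableEq ι] (f : α → W) (g g' : ι → α) : Prop :=
  ∃ i, IsRedundant K (f ∘ g) i ∧ ∃ x, g' = update g i x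

lemma IsRedundant.redundantUpdate (h : IsRedundant K (f ∘ g) i) (x : α) :
    RedundantUpdate K f g (Function.update g i x) :=
  ⟨i, h, x, rfl⟩

lemma IsRedundant.comp_update (h : IsRedundant K (f ∘ g) i) (x : α) :
    IsRedundant K (f ∘ Function.update g i x) i := by
  rw [Function.comp_update]
  exact h.update _

lemma RedundantUpdate.symm (h : RedundantUpdate K f g g') : RedundantUpdate K f g' g := by
  obtain ⟨i, hi, x, rfl⟩ := h
  simpa using (hi.comp_update x).redundantUpdate (g i)

lemma span_range_of_reflTransGen (hg : span K (Set.range (f ∘ g)) = ⊤)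
    (h : ReflTransGen (RedundantUpdate K f) g g') : span K (Set.range (f ∘ g')) = ⊤ := by
  cases h with
  | refl => exact hg
  | tail _ hlast =>
    obtain ⟨i, hi, -⟩ := hlast.symm
    exact hi.span_range

-- The redundant slot `i` serves as scratch space while `y` is carried to slot `j`.
lemma reflTransGen_redundantUpdate_exchange {k : ι} {y : α} (hi : IsRedundant K (f ∘ g) i)
    (hki : k ≠ i) (hk : IsRedundant K (f ∘ update g i y) k) (hij : i ≠ j) :
    ReflTransGen (RedundantUpdate K f) g (update (update g k (g j)) j y) := by
  set g₁ := update g i y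
  set g₂ := update g₁ k (g j)
  have hj : IsRedundant K (f ∘ g₂) j := by
    obtain rfl | hkj := eq_or_ne k j
    · exact hk.comp_update _
    · exact isRedundant_of_eq (hk.comp_update _).span_range hkj.symm
        (by simp [g₂, g₁, hij.symm, hkj.symm])
  set g₃ := update g₂ j y
  have hi₃ : IsRedundant K (f ∘ g₃) i :=
    isRedundant_of_eq (hj.comp_update _).span_range hij (by simp [g₃, g₂, g₁, hij, hki.symm])
  have hrestore : update (update g k (g j)) j y = update g₃ i (g i) := by
    simp only [g₃, g₂, g₁]
    ext l
    obtain rfl | hli := eq_or_ne l i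
    · simp [hij, hki.symm]
    · simp only [update_apply, hli, if_false]
  rw [hrestore]
  exact (((ReflTransGen.single (hi.redundantUpdate _)).tail (hk.redundantUpdate _)).tail
    (hj.redundantUpdate _)).tail (hi₃.redundantUpdate _)

theorem reflTransGen_redundantUpdate [Fintype ι] [FiniteDimensional K W]
    (hcard : Module.finrank K W < Fintype.card ι) (hg : span K (Set.range (f ∘ g)) = ⊤)
    (hg' : span K (Set.range (f ∘ g')) = ⊤) : ReflTransGen (RedundantUpdate K f) g g' := by
  classical
  induction hd : hammingDist g g' using Nat.strong_induction_on generalizing g g' with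
  | _ d ih =>
  subst hd
  obtain rfl | hne := eq_or_ne g g'
  · exact .refl
  obtain ⟨j, hj⟩ := Function.ne_iff.1 hne
  by_cases hred : IsRedundant K (f ∘ g') j
  · refine .trans (ih _ ?_ hg (hred.comp_update (g j)).span_range rfl)
      (.single (hred.redundantUpdate _).symm)
    rw [hammingDist_comm, hammingDist_comm g]
    exact hammingDist_update_apply_lt hj.symm
  obtain ⟨i, hi⟩ := exists_isRedundant hcard hg
  by_cases hgi : g i = g' i
  · have hfj : f (g' j) ∉ span K (f ∘ g '' {l | g l = g' l ∧ l ≠ i}) := by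
      refine fun h ↦ hred (isRedundant_of_mem_span hg' (span_mono ?_ h))
      rintro _ ⟨l, hl, rfl⟩
      exact ⟨l, fun hlj ↦ hj (hlj ▸ hl.1), congrArg f hl.1.symm⟩
    obtain ⟨k, hkC, hki, hk⟩ := hi.exists_exchange hfj
    have hgk : g k ≠ g' k := fun h ↦ hkC ⟨h, hki⟩
    rw [← Function.comp_update] at hk
    have hij : i ≠ j := by
      rintro rfl
      exact hj hgi
    have hpath := reflTransGen_redundantUpdate_exchange hi hki hk hij
    exact hpath.trans (ih _ (hammingDist_update_update_apply_lt hj hgk _)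
      (span_range_of_reflTransGen hg hpath) hg' rfl)
  · exact .head (hi.redundantUpdate (g' i))
      (ih _ (hammingDist_update_apply_lt hgi) (hi.comp_update _).span_range hg' rfl)

end Connectivity

end RedundantCoordinates

section Heisenberg

open Function Submodule
open scoped commutatorElement

variable {p : ℕ} [Fact p.Prime] {W : Type*} [AddCommGroup W] [Module (ZMod p) W] [HeisData p W]

lemma heis_mul (x y : W × ZMod p) :
    x * y = (x.1 + y.1, x.2 + y.2 + (2 : ZMod p)⁻¹ * HeisData.ω x.1 y.1) :=
  rfl

lemma heis_one : (1 : W × ZMod p) = (0, 0) :=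
  rfl

lemma heis_inv (x : W × ZMod p) :
    x⁻¹ = (-x.1, -x.2 + (2 : ZMod p)⁻¹ * HeisData.ω x.1 x.1) :=
  rfl

lemma fst_mem_span_of_mem_closure {S : Set (W × ZMod p)} {x : W × ZMod p}
    (hx : x ∈ Subgroup.closure S) : x.1 ∈ span (ZMod p) (Prod.fst '' S) := by
  induction hx using Subgroup.closure_induction with
  | mem x hx => exact subset_span ⟨x, hx, rfl⟩
  | one => exact zero_mem _
  | mul x y _ _ hx hy => exact add_mem hx hy
  | inv x _ hx => exact neg_mem hx

variable (halt : (HeisData.ω (p := p) (W := W)).IsAlt)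

include halt

lemma heis_pow (x : W × ZMod p) (n : ℕ) : x ^ n = ((n : ZMod p) • x.1, (n : ZMod p) * x.2) := by
  induction n with
  | zero => simp [heis_one]
  | succ n ih =>
    rw [pow_succ, ih, heis_mul]
    ext
    · simp [add_smul]
    · simp [halt.self_eq_zero, add_mul]

lemma heis_pow_prime (x : W × ZMod p) : x ^ p = 1 := by
  simp [heis_pow halt, heis_one]

lemma heis_pow_val (x : W × ZMod p) (a : ZMod p) : x ^ a.val = (a • x.1, a * x.2) := by
  rw [heis_pow halt, ZMod.natCast_zmod_val]

lemma heis_commutatorElement (hp : p ≠ 2) (x y : W × ZMod p) :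
    ⁅x, y⁆ = (0, HeisData.ω x.1 y.1) := by
  have h2 : (2 : ZMod p) ≠ 0 := Ring.two_ne_zero (by rwa [ZMod.ringChar_zmod_n])
  simp only [commutatorElement_def, heis_mul, heis_inv]
  ext
  · simp
  · simp only [map_add, map_neg, LinearMap.add_apply, LinearMap.neg_apply, halt.self_eq_zero,
      ← halt.neg x.1 y.1]
    field_simp
    ring

lemma exists_mk_mem_closure {S : Set (W × ZMod p)} {v : W}
    (hv : v ∈ span (ZMod p) (Prod.fst '' S)) : ∃ z, (v, z) ∈ Subgroup.closure S := by
  induction hv using span_induction with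
  | mem _ hx =>
    obtain ⟨s, hs, rfl⟩ := hx
    exact ⟨s.2, Subgroup.subset_closure hs⟩
  | zero => exact ⟨0, one_mem _⟩
  | add x y _ _ hx hy =>
    obtain ⟨z, hz⟩ := hx
    obtain ⟨t, ht⟩ := hy
    exact ⟨_, mul_mem hz ht⟩
  | smul a x _ hx =>
    obtain ⟨z, hz⟩ := hx
    exact ⟨_, heis_pow_val halt (x, z) a ▸ pow_mem hz a.val⟩

variable (hp : p ≠ 2) (hnd : (HeisData.ω (p := p) (W := W)).SeparatingLeft) [Nontrivial W]

include hp hnd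

lemma zero_mk_mem_closure {S : Set (W × ZMod p)} (hS : span (ZMod p) (Prod.fst '' S) = ⊤)
    (z : ZMod p) : (0, z) ∈ Subgroup.closure S := by
  obtain ⟨u, hu⟩ := exists_ne (0 : W)
  obtain ⟨w, hw⟩ : ∃ w, HeisData.ω (p := p) u w ≠ 0 := by
    contrapose! hu
    exact hnd u hu
  obtain ⟨a, ha⟩ := exists_mk_mem_closure halt (hS ▸ mem_top (x := u))
  obtain ⟨b, hb⟩ := exists_mk_mem_closure halt (hS ▸ mem_top (x := w))
  have hcomm : (0, HeisData.ω (p := p) u w) ∈ Subgroup.closure S := by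
    rw [← heis_commutatorElement halt hp (u, a) (w, b), commutatorElement_def]
    exact mul_mem (mul_mem (mul_mem ha hb) (inv_mem ha)) (inv_mem hb)
  have hpow := pow_mem hcomm (z * (HeisData.ω (p := p) u w)⁻¹).val
  rwa [heis_pow_val halt, smul_zero, inv_mul_cancel_right₀ hw] at hpow

lemma heis_closure_eq_top_iff {S : Set (W × ZMod p)} :
    Subgroup.closure S = ⊤ ↔ span (ZMod p) (Prod.fst '' S) = ⊤ := by
  refine ⟨fun h ↦ eq_top_iff.2 fun v _ ↦ ?_, fun h ↦ eq_top_iff.2 fun x _ ↦ ?_⟩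
  · exact fst_mem_span_of_mem_closure (x := (v, 0)) (h ▸ Subgroup.mem_top _)
  · obtain ⟨z, hz⟩ := exists_mk_mem_closure halt (h ▸ mem_top (x := x.1))
    simpa [heis_mul] using mul_mem hz (zero_mk_mem_closure halt hp hnd h (x.2 - z))

lemma mem_genSet_iff_span {r : ℕ} {g : Fin r → W × ZMod p} :
    g ∈ genSet r (W × ZMod p) ↔ span (ZMod p) (Set.range (Prod.fst ∘ g)) = ⊤ := by
  rw [Set.range_comp]
  exact heis_closure_eq_top_iff halt hp hnd

lemma exists_mem_genSet_numNontrivial_le [Module.Finite (ZMod p) W] [DecidableEq W] {r : ℕ}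
    (hr : Module.finrank (ZMod p) W ≤ r) :
    ∃ g ∈ genSet r (W × ZMod p), numNontrivial g ≤ Module.finrank (ZMod p) W := by
  set n := Module.finrank (ZMod p) W
  let b : Module.Basis (Fin n) (ZMod p) W := Module.finBasis (ZMod p) W
  let g : Fin r → W × ZMod p := fun i ↦ if h : i < n then (b ⟨i, h⟩, 0) else 1
  refine ⟨g, (mem_genSet_iff_span halt hp hnd).2 (eq_top_iff.2 ?_), ?_⟩
  · rw [← b.span_eq]
    refine span_mono ?_
    rintro _ ⟨k, rfl⟩
    exact ⟨k.castLE hr, by simp [g]⟩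
  · have hsub : ({i | g i ≠ 1} : Finset (Fin r)) ⊆ univ.image (Fin.castLE hr) := by
      intro i hi
      have hin : (i : ℕ) < n := by
        by_contra h
        simp [g, h] at hi
      exact mem_image.2 ⟨⟨i, hin⟩, mem_univ _, rfl⟩
    exact (card_le_card hsub).trans (card_image_le.trans (card_fin n).le)

variable [Fintype W] [DecidableEq W] {r : ℕ} (hr : Module.finrank (ZMod p) W < r)

include hr

lemma reflTransGen_paQ_of_mem_genSet {g g' : Fin r → W × ZMod p} (hg : g ∈ genSet r (W × ZMod p))
    (hg' : g' ∈ genSet r (W × ZMod p)) :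
    Relation.ReflTransGen (fun a b ↦ 0 < paQ p r (W × ZMod p) a b) g g' := by
  have hpath := reflTransGen_redundantUpdate (by simpa using hr)
    ((mem_genSet_iff_span halt hp hnd).1 hg) ((mem_genSet_iff_span halt hp hnd).1 hg')
  clear hg hg'
  induction hpath using Relation.ReflTransGen.trans_induction_on with
  | refl => exact .refl
  | single h =>
    obtain ⟨i, hi, x, rfl⟩ := h
    refine reflTransGen_paQ_update ((heis_closure_eq_top_iff halt hp hnd).2 ?_) x
    rwa [← Set.image_comp]
  | trans _ _ h₁ h₂ => exact h₁.trans h₂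

theorem exists_forall_tvDist_paQ_pow_le {δ : ℝ} (hδ : 0 < δ) :
    ∃ t, ∀ g ∈ genSet r (W × ZMod p),
      tvDist ((paQ p r (W × ZMod p) ^ t) g) (unifOn (genSet r (W × ZMod p))) ≤ δ := by
  have hr2 : 2 ≤ r := by
    have := Module.finrank_pos (R := ZMod p) (M := W)
    omega
  obtain ⟨g, hg, -⟩ := exists_mem_genSet_numNontrivial_le halt hp hnd hr.le
  exact exists_forall_tvDist_pow_le (paQ_mem_rowStochastic hr2) (paQ_apply_self_pos (by omega))
    isClosedClass_genSet
    (fun _ hg _ hg' ↦ reflTransGen_paQ_of_mem_genSet halt hp hnd hr hg hg')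
    (unifOn_mem_stdSimplex ⟨g, hg⟩) (fun _ hy ↦ if_neg hy)
    (unifOn_vecMul (paQ_mem_rowStochastic hr2) (paQ_isSymm (heis_pow_prime halt))
      isClosedClass_genSet) hδ

end Heisenberg

section Counting

open Submodule

section LinearAlgebra

variable {K V W ι : Type*} [Field K] [AddCommGroup V] [Module K V] [AddCommGroup W] [Module K W]
  [Finite V] [Fintype ι]

lemma natCard_ker_mul {φ : Module.Dual K V} (hφ : φ ≠ 0) :
    Nat.card (LinearMap.ker φ) * Nat.card K = Nat.card V := by
  rw [Module.natCard_eq_pow_finrank (K := K) (V := V), Module.natCard_eq_pow_finrank (K := K),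
    ← pow_succ, Module.Dual.finrank_ker_add_one_of_ne_zero hφ]

lemma ncard_forall_apply_eq_zero_mul {φ : Module.Dual K V} (hφ : φ ≠ 0) :
    {v : ι → V | ∀ i, φ (v i) = 0}.ncard * Nat.card K ^ Fintype.card ι =
      Nat.card V ^ Fintype.card ι := by
  have e : {v : ι → V | ∀ i, φ (v i) = 0} ≃ (ι → LinearMap.ker φ) :=
    Equiv.subtypePiEquivPi (p := fun _ v ↦ φ v = 0)
  rw [← Nat.card_coe_set_eq, Nat.card_congr e, Nat.card_fun, Nat.card_eq_fintype_card (α := ι),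
    ← mul_pow, natCard_ker_mul hφ]

-- Union bound over the hyperplanes of `W` that may contain all the `f (v i)`.
theorem ncard_span_range_comp_ne_top_mul_le [Finite K] {f : V →ₗ[K] W}
    (hf : Function.Surjective f) (hcard : Module.finrank K W < Fintype.card ι) :
    {v : ι → V | span K (Set.range (f ∘ v)) ≠ ⊤}.ncard * Nat.card K ≤
      Nat.card V ^ Fintype.card ι := by
  classical
  have : Finite W := .of_surjective f hf
  have : Finite (Module.Dual K W) := Module.finite_of_finite K
  set D := {φ : Module.Dual K W // φ ≠ 0}
  have : Fintype D := Fintype.ofFinite D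
  set q := Nat.card K
  set n := Module.finrank K W
  set r := Fintype.card ι
  set N : Set (ι → V) := {v | span K (Set.range (f ∘ v)) ≠ ⊤}
  set Z : D → Set (ι → V) := fun φ ↦ {v | ∀ i, (φ.1 ∘ₗ f) (v i) = 0}
  have hZ : ∀ φ, (Z φ).ncard * q ^ r = Nat.card V ^ r := fun φ ↦
    ncard_forall_apply_eq_zero_mul fun h ↦ φ.2 ((LinearMap.cancel_right hf).1 (by simpa using h))
  have hsub : N ⊆ ⋃ φ, Z φ := by
    intro v hv
    obtain ⟨φ, hφ, hle⟩ := exists_le_ker_of_lt_top _ (lt_top_iff_ne_top.2 hv)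
    exact Set.mem_iUnion.2 ⟨⟨φ, hφ⟩, fun i ↦ hle (subset_span ⟨i, rfl⟩)⟩
  have hD : Fintype.card D ≤ q ^ n := by
    rw [← Nat.card_eq_fintype_card]
    refine (Nat.card_le_card_of_injective _ Subtype.val_injective).trans_eq ?_
    rw [Module.natCard_eq_pow_finrank (K := K), Subspace.dual_finrank_eq]
  have hq : 0 < q := Nat.card_pos
  refine Nat.le_of_mul_le_mul_left ?_ (pow_pos hq n)
  calc q ^ n * (N.ncard * q) = N.ncard * q ^ (n + 1) := by ring
    _ ≤ (∑ φ, (Z φ).ncard) * q ^ r := by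
        gcongr
        · exact (Set.ncard_le_ncard hsub).trans (Set.ncard_iUnion_le_of_fintype _)
        · exact hcard
    _ = Fintype.card D * Nat.card V ^ r := by simp [sum_mul, hZ]
    _ ≤ q ^ n * Nat.card V ^ r := by gcongr

end LinearAlgebra

section NontrivialEntries

variable {H : Type*} [One H] [Fintype H] [DecidableEq H] {r : ℕ}

lemma sum_sub_numNontrivial :
    ∑ g : Fin r → H, ((r : ℝ) - numNontrivial g) = r * (Fintype.card H : ℝ) ^ (r - 1) := by
  have hcompl (g : Fin r → H) :
      (r : ℝ) - numNontrivial g = ∑ i, if g i = 1 then (1 : ℝ) else 0 := by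
    have h := card_filter_add_card_filter_not (s := univ) fun i ↦ g i = 1
    rw [card_fin] at h
    rw [sum_boole, numNontrivial, sub_eq_iff_eq_add]
    exact_mod_cast h.symm
  have hslice (i : Fin r) :
      ∑ g : Fin r → H, (if g i = 1 then (1 : ℝ) else 0) = (Fintype.card H : ℝ) ^ (r - 1) := by
    have h := Fintype.card_filter_piFinset_const_eq_of_mem (univ : Finset H) i (mem_univ 1)
    rw [Fintype.piFinset_univ] at h
    rw [sum_boole, h]
    simp
  simp_rw [hcompl]
  rw [sum_comm]
  simp [hslice]

-- Markov's inequality for the number of trivial entries, whose mean is `r / card H`.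
lemma card_numNontrivial_lt_mul_card_le (hr : 1 ≤ r) :
    (#{g : Fin r → H | (numNontrivial g : ℝ) < r / 2} : ℝ) * Fintype.card H ≤
      2 * (Fintype.card H : ℝ) ^ r := by
  have hr0 : (0 : ℝ) < r := by exact_mod_cast hr
  set B : Finset (Fin r → H) := {g | (numNontrivial g : ℝ) < r / 2}
  have hle (g : Fin r → H) : (0 : ℝ) ≤ r - numNontrivial g := by
    rw [sub_nonneg]
    exact_mod_cast (card_le_univ _).trans (Fintype.card_fin r).le
  have hmarkov : #B * ((r : ℝ) / 2) ≤ r * (Fintype.card H : ℝ) ^ (r - 1) := by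
    rw [← sum_sub_numNontrivial, ← nsmul_eq_mul]
    refine (card_nsmul_le_sum B (fun g ↦ (r : ℝ) - numNontrivial g) _ fun g hg ↦ ?_).trans
      (sum_le_univ_sum_of_nonneg hle)
    linarith [(mem_filter.1 hg).2]
  calc #B * (Fintype.card H : ℝ)
      ≤ 2 * (Fintype.card H : ℝ) ^ (r - 1) * Fintype.card H := by
        gcongr
        exact le_of_mul_le_mul_right (hmarkov.trans_eq (by ring)) (half_pos hr0)
    _ = 2 * (Fintype.card H : ℝ) ^ r := by rw [mul_assoc, pow_sub_one_mul (by omega)]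

end NontrivialEntries

section HeisenbergCard

variable {p : ℕ} [Fact p.Prime] {W : Type*} [AddCommGroup W] [Module (ZMod p) W] [Fintype W]

lemma card_prod_zmod : Fintype.card (W × ZMod p) = p ^ (Module.finrank (ZMod p) W + 1) := by
  rw [Fintype.card_prod, ZMod.card, Module.card_eq_pow_finrank (K := ZMod p), ZMod.card, pow_succ]

lemma nine_le_card_prod_zmod [Nontrivial W] (hp : 3 ≤ p) : 9 ≤ Fintype.card (W × ZMod p) := by
  have hn : 0 < Module.finrank (ZMod p) W := Module.finrank_pos
  calc 9 = 3 ^ 2 := by norm_num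
    _ ≤ p ^ 2 := Nat.pow_le_pow_left hp 2
    _ ≤ Fintype.card (W × ZMod p) := by
        rw [card_prod_zmod]
        exact Nat.pow_le_pow_right (by omega) (by omega)

lemma two_mul_card_pow_le_three_mul_card_genSet [HeisData p W] [Nontrivial W] {r : ℕ}
    (halt : (HeisData.ω (p := p) (W := W)).IsAlt) (hp : p ≠ 2)
    (hnd : (HeisData.ω (p := p) (W := W)).SeparatingLeft) (hr : Module.finrank (ZMod p) W < r) :
    2 * Fintype.card (W × ZMod p) ^ r ≤ 3 * Nat.card (genSet r (W × ZMod p)) := by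
  have hp3 : 3 ≤ p := (Fact.out : p.Prime).two_le.lt_of_ne' hp
  have hcompl : (genSet r (W × ZMod p))ᶜ =
      {g | span (ZMod p) (Set.range (LinearMap.fst (ZMod p) W (ZMod p) ∘ g)) ≠ ⊤} :=
    Set.ext fun _ ↦ (mem_genSet_iff_span halt hp hnd).not
  have hbad := ncard_span_range_comp_ne_top_mul_le (ι := Fin r)
    (LinearMap.fst_surjective (R := ZMod p) (M := W) (M₂ := ZMod p)) (by simpa using hr)
  rw [← hcompl, Nat.card_zmod, Fintype.card_fin, Nat.card_eq_fintype_card] at hbad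
  have htotal := Set.ncard_add_ncard_compl (genSet r (W × ZMod p))
  rw [Nat.card_fun, Nat.card_fin, Nat.card_eq_fintype_card, ← Nat.card_coe_set_eq] at htotal
  have hbad3 := (Nat.mul_le_mul_left _ hp3).trans hbad
  omega

end HeisenbergCard

end Counting

section LowerBounds

variable {p : ℕ} [Fact p.Prime] {r t : ℕ}

section Group

variable {H : Type*} [Group H] [Fintype H] [DecidableEq H] {g : Fin r → H}

lemma card_pow_le_two_mul_pow_of_tvDist_le (hr : 2 ≤ r)
    (hgen : 2 * Fintype.card H ^ r ≤ 3 * Nat.card (genSet r H)) (hg : g ∈ genSet r H)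
    (h : tvDist ((paQ p r H ^ t) g) (unifOn (genSet r H)) ≤ 1 / 4) :
    (Fintype.card H : ℝ) ^ r ≤ 2 * (2 * p * r ^ 2 + 1) ^ t := by
  have hcount := card_le_pow_of_tvDist_unifOn_le (paQ_mem_rowStochastic hr) card_paQ_ne_zero_le
    ⟨g, hg⟩ h
  have hgen' : 2 * (Fintype.card H : ℝ) ^ r ≤ 3 * Nat.card (genSet r H) := by exact_mod_cast hgen
  push_cast at hcount
  linarith

lemma div_six_le_of_tvDist_le (hr : 2 ≤ r) (hH : 9 ≤ Fintype.card H)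
    (hgen : 2 * Fintype.card H ^ r ≤ 3 * Nat.card (genSet r H)) (hg : g ∈ genSet r H)
    (h : tvDist ((paQ p r H ^ t) g) (unifOn (genSet r H)) ≤ 1 / 4) :
    (r : ℝ) / 6 ≤ (1 + 1 / (2 * r)) ^ t * numNontrivial g := by
  have hgen' : 2 * (Fintype.card H : ℝ) ^ r ≤ 3 * Nat.card (genSet r H) := by exact_mod_cast hgen
  have hH' : (9 : ℝ) ≤ Fintype.card H := by exact_mod_cast hH
  have hΩ : (0 : ℝ) < Nat.card (genSet r H) := by
    have : Nonempty (genSet r H) := ⟨g, hg⟩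
    exact_mod_cast Nat.card_pos
  set B : Finset (Fin r → H) := {g | (numNontrivial g : ℝ) < r / 2}
  have hB : 3 * (#B : ℝ) ≤ Nat.card (genSet r H) := by
    have hsmall : (#B : ℝ) * Fintype.card H ≤ 2 * (Fintype.card H : ℝ) ^ r :=
      card_numNontrivial_lt_mul_card_le (by omega)
    have := mul_le_mul_of_nonneg_left hH' (Nat.cast_nonneg #B)
    linarith
  have hmass : ∑ g ∈ B, unifOn (genSet r H) g ≤ 1 / 3 := by
    refine (sum_unifOn_le _ B).trans ?_
    rw [← div_eq_mul_inv, div_le_iff₀ hΩ]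
    linarith
  calc (r : ℝ) / 6 ≤ (1 - 1 / 4 - 1 / 3) * (r / 2) := by
        have : (0 : ℝ) ≤ r := r.cast_nonneg
        linarith
    _ ≤ (1 - 1 / 4 - ∑ g ∈ B, unifOn (genSet r H) g) * (r / 2) := by gcongr
    _ ≤ (1 + 1 / (2 * r)) ^ t * numNontrivial g :=
        mul_le_pow_mul_of_tvDist_le (paQ_mem_rowStochastic hr) (fun _ ↦ by positivity)
          (by positivity) (paQ_mulVec_numNontrivial_le hr)
          (unifOn_mem_stdSimplex ⟨g, hg⟩) h (by positivity)

end Group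

section Arithmetic

variable {n : ℕ}

lemma one_le_log_natCast {k : ℕ} (hk : 3 ≤ k) : 1 ≤ Real.log k := by
  have hk' : (3 : ℝ) ≤ k := by exact_mod_cast hk
  rw [Real.le_log_iff_exp_le (by linarith)]
  linarith [Real.exp_one_lt_d9]

lemma log_exp_one_mul {x : ℝ} (hx : x ≠ 0) : Real.log (Real.exp 1 * x) = 1 + Real.log x := by
  rw [Real.log_mul (Real.exp_ne_zero 1) hx, Real.log_exp]

lemma log_two_mul_mul_sq_add_one_le {q s : ℕ} (hq : 3 ≤ q) (hs : 1 ≤ s) :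
    Real.log (2 * q * s ^ 2 + 1) ≤ 2 * (Real.log q * Real.log (Real.exp 1 * s)) := by
  have hq' : (3 : ℝ) ≤ q := by exact_mod_cast hq
  have hs' : (1 : ℝ) ≤ s := by exact_mod_cast hs
  have hle : (2 * q * s ^ 2 + 1 : ℝ) ≤ (q * s) ^ 2 := by
    have : 1 ≤ (s : ℝ) ^ 2 := one_le_pow₀ hs'
    nlinarith [mul_le_mul_of_nonneg_right hq' (by positivity : (0 : ℝ) ≤ q * s ^ 2)]
  calc Real.log (2 * q * s ^ 2 + 1) ≤ Real.log ((q * s) ^ 2) := by gcongr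
    _ = 2 * (Real.log q + Real.log s) := by
        rw [Real.log_pow, Real.log_mul (by positivity) (by positivity)]
        norm_num
    _ ≤ 2 * (Real.log q * Real.log (Real.exp 1 * s)) := by
        rw [log_exp_one_mul (by positivity)]
        nlinarith [one_le_log_natCast hq, Real.log_nonneg hs']

lemma mul_div_log_le_of_pow_le {q : ℕ} (hq : 3 ≤ q) (hr : 2 ≤ r)
    (h : ((q : ℝ) ^ (n + 1)) ^ r ≤ 2 * (2 * q * r ^ 2 + 1) ^ t) :
    r * (n + 1) / Real.log (Real.exp 1 * r) ≤ 4 * t := by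
  have hr' : (2 : ℝ) ≤ r := by exact_mod_cast hr
  have hlogq : 1 ≤ Real.log q := one_le_log_natCast hq
  have hlogr : 1 ≤ Real.log (Real.exp 1 * r) := by
    rw [log_exp_one_mul (by positivity)]
    linarith [Real.log_nonneg (by linarith : (1 : ℝ) ≤ r)]
  have hlog2 : Real.log 2 ≤ Real.log q :=
    Real.log_le_log two_pos (by exact_mod_cast (by omega : 2 ≤ q))
  have hlog := Real.log_le_log (by positivity) h
  rw [Real.log_mul two_ne_zero (by positivity), Real.log_pow, Real.log_pow, Real.log_pow] at hlog
  push_cast at hlog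
  have hscaled : (r * (n + 1)) * Real.log q ≤
      (1 + 2 * t * Real.log (Real.exp 1 * r)) * Real.log q := by
    have := mul_le_mul_of_nonneg_left (log_two_mul_mul_sq_add_one_le hq (by omega : 1 ≤ r))
      (Nat.cast_nonneg (α := ℝ) t)
    linarith
  have hmain := le_of_mul_le_mul_right hscaled (by linarith)
  have htwo : (2 : ℝ) ≤ r * (n + 1) := by nlinarith [Nat.cast_nonneg (α := ℝ) n]
  rw [div_le_iff₀ (by linarith)]
  linarith

lemma mul_log_le_of_div_six_le (hr : 1296 ≤ r) (hn : (n : ℝ) ≤ √r)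
    (h : (r : ℝ) / 6 ≤ (1 + 1 / (2 * r)) ^ t * n) : r * Real.log r ≤ 2 * t := by
  have hr' : (1296 : ℝ) ≤ r := by exact_mod_cast hr
  have hr0 : (0 : ℝ) < r := by linarith
  have hsqrt : 0 < √(r : ℝ) := Real.sqrt_pos.2 hr0
  have hexp : √r / 6 ≤ Real.exp (t * (1 / (2 * r))) := by
    refine le_of_mul_le_mul_right ?_ hsqrt
    calc √r / 6 * √r = r / 6 := by rw [div_mul_eq_mul_div, Real.mul_self_sqrt hr0.le]
      _ ≤ (1 + 1 / (2 * r)) ^ t * n := h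
      _ ≤ Real.exp (1 / (2 * r)) ^ t * √r := by
          gcongr
          linarith [Real.add_one_le_exp (1 / (2 * (r : ℝ)))]
      _ = Real.exp (t * (1 / (2 * r))) * √r := by rw [Real.exp_nat_mul]
  have hlog := Real.log_le_log (by positivity) hexp
  rw [Real.log_exp, Real.log_div hsqrt.ne' (by norm_num), Real.log_sqrt hr0.le] at hlog
  have hlog6 : 4 * Real.log 6 ≤ Real.log r := by
    have := Real.log_le_log (by norm_num) hr'
    rw [show (1296 : ℝ) = 6 ^ 4 by norm_num, Real.log_pow] at this
    exact_mod_cast this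
  have hquarter : Real.log r / 4 ≤ t * (1 / (2 * r)) := by linarith
  rw [mul_one_div, le_div_iff₀ (by positivity)] at hquarter
  linarith

lemma log_mul_log_exp_one_mul_le_sqrt {x : ℝ} (hx : Real.exp 1 ≤ x) :
    Real.log x * Real.log (Real.exp 1 * x) ≤ 32 * √x := by
  have hx0 : 0 < x := (Real.exp_pos 1).trans_le hx
  have hlog : 1 ≤ Real.log x := (Real.le_log_iff_exp_le hx0).2 hx
  have hlog4 : Real.log x ≤ 4 * x ^ (1 / 4 : ℝ) := by
    have := Real.log_le_rpow_div hx0.le (show (0 : ℝ) < 1 / 4 by norm_num)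
    linarith
  have hsq : x ^ (1 / 4 : ℝ) * x ^ (1 / 4 : ℝ) = √x := by
    rw [← Real.rpow_add hx0, Real.sqrt_eq_rpow]
    norm_num
  rw [log_exp_one_mul hx0.ne']
  calc Real.log x * (1 + Real.log x) ≤ 2 * (Real.log x * Real.log x) := by nlinarith
    _ ≤ 2 * ((4 * x ^ (1 / 4 : ℝ)) * (4 * x ^ (1 / 4 : ℝ))) := by gcongr
    _ = 32 * √x := by linear_combination 32 * hsq

-- For `n + 1 < √r` the drift bound yields `r log r`; otherwise the counting bound exceeds it.
lemma max_le_of_pow_le_of_div_six_le {q : ℕ} (hq : 3 ≤ q) (hr : 1296 ≤ r)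
    (hcount : ((q : ℝ) ^ (n + 1)) ^ r ≤ 2 * (2 * q * r ^ 2 + 1) ^ t)
    (hdrift : (r : ℝ) / 6 ≤ (1 + 1 / (2 * r)) ^ t * n) :
    max (r * Real.log r) (r * (n + 1) / Real.log (Real.exp 1 * r)) ≤ 128 * t := by
  have hr' : (1296 : ℝ) ≤ r := by exact_mod_cast hr
  have hdim := mul_div_log_le_of_pow_le hq (by omega) hcount
  refine max_le ?_ (by linarith)
  obtain hn | hn := le_total √(r : ℝ) (n + 1)
  · have hsqrt := log_mul_log_exp_one_mul_le_sqrt (x := r) (by linarith [Real.exp_one_lt_d9])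
    have hlog : 0 < Real.log (Real.exp 1 * r) := by
      rw [log_exp_one_mul (by positivity)]
      linarith [one_le_log_natCast (by omega : 3 ≤ r)]
    calc r * Real.log r ≤ r * (32 * (n + 1) / Real.log (Real.exp 1 * r)) := by
          gcongr
          rw [le_div_iff₀ hlog]
          linarith
      _ = 32 * (r * (n + 1) / Real.log (Real.exp 1 * r)) := by ring
      _ ≤ 128 * t := by linarith
  · linarith [mul_log_le_of_div_six_le hr (by linarith) hdrift]

end Arithmetic

end LowerBounds

theorem stmt19_general {p : ℕ} [Fact p.Prime] (hp : p ≠ 2) {r : ℕ} (hr : 1296 ≤ r) {W : Type*}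
    [AddCommGroup W] [Module (ZMod p) W] [Fintype W] [DecidableEq W] [Nontrivial W] [HeisData p W]
    (hfin : Module.finrank (ZMod p) W < r) (halt : (HeisData.ω (p := p) (W := W)).IsAlt)
    (hnd : (HeisData.ω (p := p) (W := W)).SeparatingLeft) :
    1 / 128 * max (r * Real.log r)
        (r * (Module.finrank (ZMod p) W + 1) / Real.log (Real.exp 1 * r)) ≤
      (mixTime (paQ p r (W × ZMod p)) (unifOn (genSet r (W × ZMod p)))
        (genSet r (W × ZMod p)) : ℝ) := by
  have hp3 : 3 ≤ p := (Fact.out : p.Prime).two_le.lt_of_ne' hp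
  have hr2 : 2 ≤ r := by omega
  obtain ⟨g, hg, hgn⟩ := exists_mem_genSet_numNontrivial_le halt hp hnd hfin.le
  have hmix := tvDist_pow_mixTime_le
    (exists_forall_tvDist_paQ_pow_le halt hp hnd hfin (by norm_num)) hg
  have hgen := two_mul_card_pow_le_three_mul_card_genSet halt hp hnd hfin
  have hcount := card_pow_le_two_mul_pow_of_tvDist_le hr2 hgen hg hmix
  have hdrift := div_six_le_of_tvDist_le hr2 (nine_le_card_prod_zmod hp3) hgen hg hmix
  rw [card_prod_zmod, Nat.cast_pow] at hcount
  have hmax := max_le_of_pow_le_of_div_six_le hp3 hr hcount (hdrift.trans (by gcongr))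
  linarith

theorem stmt19 :
    ∀ (p : ℕ) [Fact (Nat.Prime p)], p ≠ 2 →
      ∃ c : ℝ, 0 < c ∧ ∃ r₀ : ℕ,
        ∀ (m : ℕ), 1 ≤ m → ∀ r : ℕ, 2 * m + 1 ≤ r → r₀ ≤ r →
          ∀ (W : Type) [AddCommGroup W] [Module (ZMod p) W] [Fintype W]
            [DecidableEq W] [HeisData p W],
            Module.finrank (ZMod p) W = 2 * m →
            (∀ v : W, HeisData.ω (p := p) v v = 0) →
            (∀ v : W, (∀ w : W, HeisData.ω (p := p) v w = 0) → v = 0) →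
            c * max ((r : ℝ) * Real.log r)
                ((r : ℝ) * ((2 * m : ℝ) + 1) / Real.log (Real.exp 1 * r)) ≤
              (mixTime (paQ p r (W × ZMod p)) (unifOn (genSet r (W × ZMod p)))
                (genSet r (W × ZMod p)) : ℝ) := by
  intro p _ hp
  refine ⟨1 / 128, by norm_num, 1296, fun m hm r hmr hr W _ _ _ _ _ hfin halt hnd ↦ ?_⟩
  have : Nontrivial W := Module.nontrivial_of_finrank_pos (R := ZMod p) (by omega)
  simpa [hfin] using stmt19_general hp hr (by omega) halt hnd
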